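/- arXiv:1902.03505 — 2 statements merged into one kernel-verified Lean document; each statement's English description precedes it below -/
import Mathlib

section
/- Fix integers N, d ≥ 2. For each p ∈ (0,∞) let X^(p) ∈ S(N,d) be a configuration attaining F_{p,N,d}. If X ∈ S(N,d) is the limit of a subsequence X^(p_k) with p_k → ∞ as k → ∞, then X minimizes the coherence: c(X) = F_{∞,N,d}. -/
open scoped RealInnerProductSpace
open Real

/-- The `p`-frame potential `FP_{p,N,d}(X) = Σ_{k≠ℓ} |⟨x_k,x_ℓ⟩|^p`. -/
noncomputable def framePotential (d N : ℕ) (p : ℝ)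
    (X : Fin N → EuclideanSpace ℝ (Fin d)) : ℝ :=
  ∑ k : Fin N, ∑ l : Fin N, if k ≠ l then |⟪X k, X l⟫| ^ p else 0

/-- The coherence `c(X) = max_{k≠ℓ} |⟨x_k,x_ℓ⟩|`. -/
noncomputable def coherence (d N : ℕ) (X : Fin N → EuclideanSpace ℝ (Fin d)) : ℝ :=
  sSup {v | ∃ k l : Fin N, k ≠ l ∧ v = |⟪X k, X l⟫|}

/-- `F_{∞,N,d}`, the minimal coherence over `S(N,d)`. -/
noncomputable def minCoherence (d N : ℕ) : ℝ :=
  sInf (coherence d N '' {X | ∀ i, ‖X i‖ = 1})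

lemma aux_bdd (d N : ℕ) (X : Fin N → EuclideanSpace ℝ (Fin d)) :
    BddAbove {v | ∃ k l : Fin N, k ≠ l ∧ v = |⟪X k, X l⟫|} := by
  apply Set.Finite.bddAbove
  refine (Set.finite_range (fun q : Fin N × Fin N => |⟪X q.1, X q.2⟫|)).subset ?_
  rintro v ⟨k, l, -, rfl⟩
  exact ⟨(k, l), rfl⟩

lemma aux_le (d N : ℕ) (X : Fin N → EuclideanSpace ℝ (Fin d)) (k l : Fin N) (h : k ≠ l) :
    |⟪X k, X l⟫| ≤ coherence d N X :=
  le_csSup (aux_bdd d N X) ⟨k, l, h, rfl⟩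

lemma aux_nonneg (d N : ℕ) (X : Fin N → EuclideanSpace ℝ (Fin d)) :
    0 ≤ coherence d N X := by
  apply Real.sSup_nonneg
  rintro v ⟨k, l, -, rfl⟩
  exact abs_nonneg _

lemma aux_upper (d N : ℕ) (p : ℝ) (hp : 0 < p) (X : Fin N → EuclideanSpace ℝ (Fin d)) :
    framePotential d N p X ≤ (N : ℝ) * (N * coherence d N X ^ p) := by
  have hc : 0 ≤ coherence d N X ^ p := Real.rpow_nonneg (aux_nonneg d N X) p
  have h : framePotential d N p X ≤ ∑ k : Fin N, ∑ l : Fin N, coherence d N X ^ p := by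
    refine Finset.sum_le_sum fun k _ => Finset.sum_le_sum fun l _ => ?_
    split_ifs with h
    · exact Real.rpow_le_rpow (abs_nonneg _) (aux_le d N X k l h) hp.le
    · exact hc
  simpa using h

lemma aux_lower (d N : ℕ) (p : ℝ) (X : Fin N → EuclideanSpace ℝ (Fin d))
    (k l : Fin N) (h : k ≠ l) : |⟪X k, X l⟫| ^ p ≤ framePotential d N p X := by
  have h0 : ∀ i j : Fin N, 0 ≤ (if i ≠ j then |⟪X i, X j⟫| ^ p else 0) := by
    intro i j
    split_ifs
    · exact Real.rpow_nonneg (abs_nonneg _) p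
    · exact le_rfl
  calc |⟪X k, X l⟫| ^ p = (if k ≠ l then |⟪X k, X l⟫| ^ p else 0) := by rw [if_pos h]
    _ ≤ ∑ j : Fin N, (if k ≠ j then |⟪X k, X j⟫| ^ p else 0) :=
      Finset.single_le_sum (f := fun j => if k ≠ j then |⟪X k, X j⟫| ^ p else 0)
        (fun j _ => h0 k j) (Finset.mem_univ l)
    _ ≤ framePotential d N p X :=
      Finset.single_le_sum
        (f := fun i => ∑ j : Fin N, if i ≠ j then |⟪X i, X j⟫| ^ p else 0)
        (fun i _ => Finset.sum_nonneg fun j _ => h0 i j) (Finset.mem_univ k)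

/-- If `X^(p)` is an optimal configuration of the `p`-frame potential for every `p ∈ (0,∞)`
and `X₀ ∈ S(N,d)` is the limit of a subsequence `X^(p_k)` with `p_k → ∞`, then `X₀`
minimizes the coherence. -/
theorem cluster_point_of_minimizers_minimizes_coherence
    (d N : ℕ) (hd : 2 ≤ d) (hN : 2 ≤ N)
    (X : ℝ → Fin N → EuclideanSpace ℝ (Fin d))
    (hXunit : ∀ p : ℝ, 0 < p → ∀ i, ‖X p i‖ = 1)
    (hXmin : ∀ p : ℝ, 0 < p → ∀ Y : Fin N → EuclideanSpace ℝ (Fin d),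
      (∀ i, ‖Y i‖ = 1) → framePotential d N p (X p) ≤ framePotential d N p Y)
    (pk : ℕ → ℝ) (hpk0 : ∀ k, 0 < pk k)
    (hpk : Filter.Tendsto pk Filter.atTop Filter.atTop)
    (X0 : Fin N → EuclideanSpace ℝ (Fin d)) (hX0unit : ∀ i, ‖X0 i‖ = 1)
    (hX0 : Filter.Tendsto (fun k => X (pk k)) Filter.atTop (nhds X0)) :
    coherence d N X0 = minCoherence d N := by
  have key : ∀ Y : Fin N → EuclideanSpace ℝ (Fin d), (∀ i, ‖Y i‖ = 1) →
      coherence d N X0 ≤ coherence d N Y := by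
    intro Y hY
    have hc := aux_nonneg d N Y
    apply Real.sSup_le _ hc
    rintro v ⟨k, l, hkl, rfl⟩
    by_contra! hlt
    obtain ⟨b, hcb, hba⟩ := exists_between hlt
    have hb : 0 < b := hc.trans_lt hcb
    have hcont : Filter.Tendsto (fun n => |⟪X (pk n) k, X (pk n) l⟫|) Filter.atTop
        (nhds |⟪X0 k, X0 l⟫|) := by
      have h1 := tendsto_pi_nhds.1 hX0 k
      have h2 := tendsto_pi_nhds.1 hX0 l
      exact (h1.inner h2).abs
    have hev := hcont.eventually (lt_mem_nhds hba)
    have hr0 : 0 ≤ coherence d N Y / b := div_nonneg hc hb.le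
    have hr1 : coherence d N Y / b < 1 := (div_lt_one hb).2 hcb
    have ht := ((tendsto_rpow_atTop_of_base_lt_one _ (by linarith) hr1).comp hpk).const_mul
      ((N : ℝ) * N)
    rw [mul_zero] at ht
    have hev2 := ht.eventually (gt_mem_nhds one_pos)
    obtain ⟨n, hn1, hn2⟩ := (hev.and hev2).exists
    have hp := hpk0 n
    have hbp : 0 < b ^ pk n := Real.rpow_pos_of_pos hb _
    have h1 : b ^ pk n ≤ (N : ℝ) * (N * coherence d N Y ^ pk n) :=
      calc b ^ pk n ≤ |⟪X (pk n) k, X (pk n) l⟫| ^ pk n :=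
            Real.rpow_le_rpow hb.le hn1.le hp.le
        _ ≤ framePotential d N (pk n) (X (pk n)) := aux_lower d N _ _ k l hkl
        _ ≤ framePotential d N (pk n) Y := hXmin _ hp Y hY
        _ ≤ _ := aux_upper d N _ hp Y
    simp only [Function.comp] at hn2
    rw [Real.div_rpow hc hb.le, ← mul_div_assoc, div_lt_one hbp] at hn2
    linarith
  unfold minCoherence
  apply le_antisymm
  · apply le_csInf
    · exact ⟨_, X0, hX0unit, rfl⟩
    · rintro _ ⟨Y, hY, rfl⟩
      exact key Y hY
  · apply csInf_le
    · refine ⟨0, ?_⟩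
      rintro _ ⟨Y, hY, rfl⟩
      exact aux_nonneg d N Y
    · exact ⟨X0, hX0unit, rfl⟩
end

section
/- Fix an integer d ≥ 2 and p ∈ (0,∞). Then lim_{N→∞} F_{p,N,d}/N² = P_{p,d}. -/
open scoped RealInnerProductSpace
open Real MeasureTheory

/-- `F_{p,N,d}`, the minimum of the `p`-frame potential over `S(N,d)`. -/
noncomputable def minFramePotential (d N : ℕ) (p : ℝ) : ℝ :=
  sInf (framePotential d N p '' {X | ∀ i, ‖X i‖ = 1})

/-- The probabilistic `p`-frame potential of a measure `μ` on the unit sphere `S^{d-1}`: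
`PFP_{p,d}(μ) = ∫∫ |⟨x,y⟩|^p dμ(x)dμ(y)`. -/
noncomputable def probFramePotential (d : ℕ) (p : ℝ)
    (μ : Measure (Metric.sphere (0 : EuclideanSpace ℝ (Fin d)) 1)) : ℝ :=
  ∫ x, ∫ y, |⟪(x : EuclideanSpace ℝ (Fin d)), (y : EuclideanSpace ℝ (Fin d))⟫| ^ p ∂μ ∂μ

/-- `P_{p,d}`, the minimum of the probabilistic `p`-frame potential over all Borel
probability measures on the unit sphere `S^{d-1}`. -/
noncomputable def minProbFramePotential (d : ℕ) (p : ℝ) : ℝ :=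
  sInf {v | ∃ μ : Measure (Metric.sphere (0 : EuclideanSpace ℝ (Fin d)) 1),
    IsProbabilityMeasure μ ∧ v = probFramePotential d p μ}

section aux
open Filter Topology

private abbrev Sph (d : ℕ) := Metric.sphere (0 : EuclideanSpace ℝ (Fin d)) 1

private lemma ff_cont (d : ℕ) (p : ℝ) (hp : 0 < p) :
    Continuous (fun z : Metric.sphere (0 : EuclideanSpace ℝ (Fin d)) 1 ×
        Metric.sphere (0 : EuclideanSpace ℝ (Fin d)) 1 =>
      |⟪(z.1 : EuclideanSpace ℝ (Fin d)), (z.2 : EuclideanSpace ℝ (Fin d))⟫| ^ p) := by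
  refine Continuous.rpow_const ?_ (fun _ => Or.inr hp.le)
  fun_prop

private lemma ff_le (d : ℕ) (p : ℝ) (hp : 0 < p) (x y : EuclideanSpace ℝ (Fin d))
    (hx : ‖x‖ = 1) (hy : ‖y‖ = 1) : |⟪x, y⟫| ^ p ≤ 1 := by
  refine Real.rpow_le_one (abs_nonneg _) ?_ hp.le
  have := abs_real_inner_le_norm x y
  simpa [hx, hy] using this

private lemma ff_nonneg (d : ℕ) (p : ℝ) (x y : EuclideanSpace ℝ (Fin d)) :
    0 ≤ |⟪x, y⟫| ^ p := Real.rpow_nonneg (abs_nonneg _) _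

private lemma fp_nonneg (d N : ℕ) (p : ℝ) (X : Fin N → EuclideanSpace ℝ (Fin d)) :
    0 ≤ framePotential d N p X := by
  unfold framePotential
  refine Finset.sum_nonneg fun k _ => Finset.sum_nonneg fun l _ => ?_
  split_ifs
  · exact ff_nonneg d p _ _
  · exact le_rfl

private lemma pfp_nonneg (d : ℕ) (p : ℝ)
    (μ : Measure (Metric.sphere (0 : EuclideanSpace ℝ (Fin d)) 1)) :
    0 ≤ probFramePotential d p μ :=
  integral_nonneg fun _ => integral_nonneg fun _ => ff_nonneg d p _ _

private lemma minFP_le (d N : ℕ) (p : ℝ) (X : Fin N → EuclideanSpace ℝ (Fin d))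
    (hX : ∀ i, ‖X i‖ = 1) : minFramePotential d N p ≤ framePotential d N p X :=
  csInf_le ⟨0, by rintro _ ⟨Y, _, rfl⟩; exact fp_nonneg d N p Y⟩ ⟨X, hX, rfl⟩

private lemma minPFP_le (d : ℕ) (p : ℝ)
    (μ : Measure (Metric.sphere (0 : EuclideanSpace ℝ (Fin d)) 1)) [h : IsProbabilityMeasure μ] :
    minProbFramePotential d p ≤ probFramePotential d p μ :=
  csInf_le ⟨0, by rintro _ ⟨ν, _, rfl⟩; exact pfp_nonneg d p ν⟩ ⟨μ, h, rfl⟩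

private lemma upper (d N : ℕ) (p : ℝ) (hp : 0 < p)
    (μ : Measure (Metric.sphere (0 : EuclideanSpace ℝ (Fin d)) 1)) [IsProbabilityMeasure μ] :
    minFramePotential d N p ≤ (N : ℝ) ^ 2 * probFramePotential d p μ := by
  let f : Sph d × Sph d → ℝ := fun z =>
    |⟪(z.1 : EuclideanSpace ℝ (Fin d)), (z.2 : EuclideanSpace ℝ (Fin d))⟫| ^ p
  have hfc : Continuous f := ff_cont d p hp
  have hfb : ∀ z, ‖f z‖ ≤ 1 := fun z => by
    rw [Real.norm_of_nonneg (ff_nonneg d p _ _)]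
    exact ff_le d p hp _ _ (by simpa using z.1.2) (by simpa using z.2.2)
  let ν : Measure (Fin N → Sph d) := Measure.pi fun _ => μ
  have hint : ∀ k l : Fin N, Integrable (fun X : Fin N → Sph d => f (X k, X l)) ν := fun k l =>
    Integrable.of_bound (by
      have : Continuous fun X : Fin N → Sph d => f (X k, X l) := hfc.comp (by fun_prop)
      exact this.aestronglyMeasurable) 1 (Eventually.of_forall fun X => hfb _)
  have hfi : Integrable f (μ.prod μ) :=
    Integrable.of_bound hfc.aestronglyMeasurable 1 (Eventually.of_forall hfb)
  have hval : ∀ k l : Fin N, k ≠ l → ∫ X, f (X k, X l) ∂ν = probFramePotential d p μ := by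
    intro k l hkl
    have hI : ProbabilityTheory.iIndepFun (fun (i : Fin N) (X : Fin N → Sph d) => X i) ν :=
      ProbabilityTheory.iIndepFun_pi (X := fun _ => id) (fun i => aemeasurable_id)
    have h2 := (ProbabilityTheory.indepFun_iff_map_prod_eq_prod_map_map
      (measurable_pi_apply k).aemeasurable (measurable_pi_apply l).aemeasurable).1
      (hI.indepFun hkl)
    have hk : ∀ k : Fin N, ν.map (fun X => X k) = μ := fun k =>
      (measurePreserving_eval (fun _ : Fin N => μ) k).map_eq
    rw [hk, hk] at h2
    have h3 : ∫ z, f z ∂(μ.prod μ) = ∫ X, f (X k, X l) ∂ν := by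
      rw [← h2, integral_map (by fun_prop) hfc.aestronglyMeasurable]
    rw [← h3, integral_prod _ hfi]
    rfl
  have hterm : ∀ k l : Fin N,
      Integrable (fun X : Fin N → Sph d => if k ≠ l then f (X k, X l) else 0) ν := by
    intro k l
    split_ifs
    · exact hint k l
    · exact integrable_zero _ _ _
  have h1 : minFramePotential d N p
      ≤ ∫ X, ∑ k : Fin N, ∑ l : Fin N, (if k ≠ l then f (X k, X l) else 0) ∂ν := by
    have : minFramePotential d N p = ∫ X, minFramePotential d N p ∂ν := by simp
    rw [this]
    refine integral_mono (integrable_const _)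
      (integrable_finsetSum _ fun k _ => integrable_finsetSum _ fun l _ => hterm k l) ?_
    intro X
    exact minFP_le d N p (fun i => (X i : EuclideanSpace ℝ (Fin d)))
      (fun i => by simpa using (X i).2)
  refine h1.trans ?_
  rw [integral_finsetSum _ fun k _ => integrable_finsetSum _ fun l _ => hterm k l]
  calc _ ≤ ∑ k : Fin N, ∑ l : Fin N, probFramePotential d p μ := by
        refine Finset.sum_le_sum fun k _ => ?_
        rw [integral_finsetSum _ fun l _ => hterm k l]
        refine Finset.sum_le_sum fun l _ => ?_
        by_cases hkl : k = l
        · simpa [hkl] using pfp_nonneg d p μ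
        · simpa [hkl] using (hval k l hkl).le
    _ = _ := by simp; ring

private lemma lower (d N : ℕ) (p : ℝ) (hp : 0 < p) (hN : 0 < N)
    (X : Fin N → EuclideanSpace ℝ (Fin d)) (hX : ∀ i, ‖X i‖ = 1) :
    (N : ℝ) ^ 2 * minProbFramePotential d p ≤ framePotential d N p X + N := by
  let Y : Fin N → Sph d := fun i => ⟨X i, by simpa using hX i⟩
  haveI : Nonempty (Fin N) := ⟨⟨0, hN⟩⟩
  let ρ : Measure (Sph d) := ∑ i : Fin N, Measure.dirac (Y i)
  let μ : Measure (Sph d) := (N : ENNReal)⁻¹ • ρ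
  have hN0 : (N : ENNReal) ≠ 0 := by exact_mod_cast hN.ne'
  haveI : IsProbabilityMeasure μ := ⟨by
    simp [μ, ρ, ENNReal.inv_mul_cancel hN0 (ENNReal.natCast_ne_top N)]⟩
  have hI : ∀ g : Sph d → ℝ, ∫ x, g x ∂μ = (N : ℝ)⁻¹ * ∑ i, g (Y i) := by
    intro g
    simp only [μ, ρ]
    rw [integral_smul_measure, integral_finsetSum_measure]
    · simp [integral_dirac]
    · intro i _
      exact integrable_dirac (by simp)
  clear_value μ
  have hNR : (N : ℝ) ≠ 0 := by exact_mod_cast hN.ne'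
  have h := minPFP_le d p μ
  have h2 : (N : ℝ) ^ 2 * probFramePotential d p μ = ∑ k, ∑ l, |⟪X k, X l⟫| ^ p := by
    unfold probFramePotential
    rw [hI]
    simp_rw [hI]
    rw [← Finset.mul_sum]
    field_simp
    rfl
  have h3 : ∑ k, ∑ l, |⟪X k, X l⟫| ^ p ≤ framePotential d N p X + N := by
    have : framePotential d N p X + N
        = ∑ k : Fin N, ∑ l : Fin N, ((if k ≠ l then |⟪X k, X l⟫| ^ p else 0)
          + if k = l then 1 else 0) := by
      simp [framePotential, Finset.sum_add_distrib]
    rw [this]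
    refine Finset.sum_le_sum fun k _ => Finset.sum_le_sum fun l _ => ?_
    by_cases hkl : k = l
    · simpa [hkl] using ff_le d p hp (X l) (X l) (hX l) (hX l)
    · simp [hkl]
  calc _ ≤ (N : ℝ) ^ 2 * probFramePotential d p μ := by gcongr
    _ ≤ _ := h2.le.trans h3

end aux

/-- `lim_{N→∞} F_{p,N,d}/N² = P_{p,d}`. -/
theorem tendsto_minFramePotential_div_sq
    (d : ℕ) (hd : 2 ≤ d) (p : ℝ) (hp : 0 < p) :
    Filter.Tendsto (fun N : ℕ => minFramePotential d N p / (N : ℝ) ^ 2)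
      Filter.atTop (nhds (minProbFramePotential d p)) := by
  let e : EuclideanSpace ℝ (Fin d) := EuclideanSpace.single ⟨0, by omega⟩ 1
  have he : ‖e‖ = 1 := by simp [e]
  have hlim : Filter.Tendsto (fun N : ℕ => minProbFramePotential d p - 1 / (N : ℝ))
      Filter.atTop (nhds (minProbFramePotential d p)) := by
    simpa using tendsto_const_nhds.sub (tendsto_one_div_atTop_nhds_zero_nat (𝕜 := ℝ))
  refine tendsto_of_tendsto_of_tendsto_of_le_of_le' hlim tendsto_const_nhds ?_ ?_
  · filter_upwards [Filter.eventually_gt_atTop 0] with N hN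
    have hNR : (0 : ℝ) < N := by exact_mod_cast hN
    have h : (N : ℝ) ^ 2 * minProbFramePotential d p - N ≤ minFramePotential d N p := by
      refine le_csInf ⟨_, fun _ => e, fun _ => he, rfl⟩ ?_
      rintro _ ⟨X, hX, rfl⟩
      linarith [lower d N p hp hN X hX]
    rw [le_div_iff₀ (by positivity)]
    refine le_trans (le_of_eq ?_) h
    field_simp
  · filter_upwards [Filter.eventually_gt_atTop 0] with N hN
    have hNR : (0 : ℝ) < N := by exact_mod_cast hN
    refine le_csInf ⟨_, Measure.dirac ⟨e, by simpa using he⟩, inferInstance, rfl⟩ ?_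
    rintro _ ⟨μ, hμ, rfl⟩
    rw [div_le_iff₀ (by positivity)]
    linarith [upper d N p hp μ]
end
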